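/- Let γ : ℝ → ℂ be a smooth curve parametrized by arclength with γ(t) ≠ 0 for all t, satisfying the Anciaux equation γ''(t) = ⟨γ'(t), i·γ(t)⟩·((|γ(t)|² − 1)/|γ(t)|²) · i·γ'(t). Then the function t ↦ |γ(t)| · ⟨γ'(t), i·γ(t)⟩ · e^{−|γ(t)|²/2} is constant on ℝ, equal to E := |γ(0)|·⟨γ'(0), i·γ(0)⟩·e^{−|γ(0)|²/2}; consequently, writing r(t) = |γ(t)|, the curvature κ(t) = ⟨γ''(t), i·γ'(t)⟩ satisfies κ(t) = E·e^{r(t)²/2}·(r(t)² − 1)/r(t)³ for all t. -/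

import Mathlib

/-- Real inner product on ℂ ≅ ℝ²: ⟨u,v⟩ = Re(u · conj v). -/
noncomputable def rinner (u v : ℂ) : ℝ := u.re * v.re + u.im * v.im

/-!
Write `a = ⟪γ', Jγ⟫`, where `J` is an isometry with `⟪Jv, v⟫ = 0`, such as the quarter turn of `ℂ`.
If `γ'' = k Jγ'`, then `a' = ⟪k Jγ', Jγ⟫ + ⟪γ', Jγ'⟫ = k ⟪γ', γ⟫`, so along solutions of
`γ'' = a g(‖γ‖²) Jγ'` one gets `a' = a g(‖γ‖²) (‖γ‖²)' / 2`. This linear equation has the first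
integral `a exp(-G(‖γ‖²) / 2)` for any primitive `G` of `g`. Anciaux's equation is the case
`g(x) = (x - 1) / x`, `G(x) = x - log x`, for which `exp(-G(r²) / 2) = r exp(-r² / 2)`.
-/

open scoped RealInnerProductSpace

lemma hasDerivAt_sub_log {x : ℝ} (hx : x ≠ 0) :
    HasDerivAt (fun y ↦ y - Real.log y) ((x - 1) / x) x := by
  refine ((hasDerivAt_id x).sub (Real.hasDerivAt_log hx)).congr_deriv ?_
  field_simp

lemma exp_neg_sq_sub_log_sq_div_two {r : ℝ} (hr : 0 < r) :
    Real.exp (-(r ^ 2 - Real.log (r ^ 2)) / 2) = r * Real.exp (-r ^ 2 / 2) := by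
  have hexponent : -(r ^ 2 - Real.log (r ^ 2)) / 2 = Real.log r + -r ^ 2 / 2 := by
    rw [Real.log_pow]
    push_cast
    ring
  rw [hexponent, Real.exp_add, Real.exp_log hr]

section SkewIsometry

variable {E : Type*} [NormedAddCommGroup E] [InnerProductSpace ℝ E]
  {J : E →ₗᵢ[ℝ] E} {γ γ' γ'' : ℝ → E}

lemma hasDerivAt_inner_map_of_hasDerivAt_smul_map {k t : ℝ} (hJ : ∀ v, ⟪J v, v⟫ = 0)
    (hγ : HasDerivAt γ (γ' t) t) (hγ' : HasDerivAt γ' (k • J (γ' t)) t) :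
    HasDerivAt (fun s ↦ ⟪γ' s, J (γ s)⟫) (k * ⟪γ t, γ' t⟫) t := by
  have hJγ : HasDerivAt (fun s ↦ J (γ s)) (J (γ' t)) t :=
    J.toContinuousLinearMap.hasFDerivAt.comp_hasDerivAt t hγ
  refine (hγ'.inner ℝ hJγ).congr_deriv ?_
  rw [real_inner_comm, hJ, zero_add, real_inner_smul_left, J.inner_map_map, real_inner_comm]

theorem inner_map_mul_exp_neg_primitive_eq {g G : ℝ → ℝ} (hJ : ∀ v, ⟪J v, v⟫ = 0)
    (hγ : ∀ t, HasDerivAt γ (γ' t) t)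
    (hγ' : ∀ t, HasDerivAt γ' ((⟪γ' t, J (γ t)⟫ * g (‖γ t‖ ^ 2)) • J (γ' t)) t)
    (hG : ∀ t, HasDerivAt G (g (‖γ t‖ ^ 2)) (‖γ t‖ ^ 2)) (s t : ℝ) :
    ⟪γ' s, J (γ s)⟫ * Real.exp (-G (‖γ s‖ ^ 2) / 2) =
      ⟪γ' t, J (γ t)⟫ * Real.exp (-G (‖γ t‖ ^ 2) / 2) := by
  have hderiv (t : ℝ) : HasDerivAt
      (fun s ↦ ⟪γ' s, J (γ s)⟫ * Real.exp (-G (‖γ s‖ ^ 2) / 2)) 0 t := by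
    have hinner := hasDerivAt_inner_map_of_hasDerivAt_smul_map hJ (hγ t) (hγ' t)
    have hprim := (hG t).comp t (hγ t).norm_sq
    refine (hinner.mul (hprim.neg.div_const 2).exp).congr_deriv ?_
    simp only [Pi.neg_apply, Function.comp_apply]
    ring
  exact is_const_of_deriv_eq_zero (fun t ↦ (hderiv t).differentiableAt)
    (fun t ↦ (hderiv t).deriv) s t

theorem anciaux_first_integral (hJ : ∀ v, ⟪J v, v⟫ = 0) (hγ : ∀ t, HasDerivAt γ (γ' t) t)
    (hne : ∀ t, γ t ≠ 0)
    (hAnc : ∀ t, HasDerivAt γ'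
      ((⟪γ' t, J (γ t)⟫ * ((‖γ t‖ ^ 2 - 1) / ‖γ t‖ ^ 2)) • J (γ' t)) t) (s t : ℝ) :
    ‖γ s‖ * ⟪γ' s, J (γ s)⟫ * Real.exp (-‖γ s‖ ^ 2 / 2) =
      ‖γ t‖ * ⟪γ' t, J (γ t)⟫ * Real.exp (-‖γ t‖ ^ 2 / 2) := by
  have hnorm (t : ℝ) : 0 < ‖γ t‖ := norm_pos_iff.2 (hne t)
  have hconst := inner_map_mul_exp_neg_primitive_eq hJ hγ (g := fun x ↦ (x - 1) / x) hAnc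
    (fun t ↦ hasDerivAt_sub_log (pow_pos (hnorm t) 2).ne') s t
  simp only [exp_neg_sq_sub_log_sq_div_two (hnorm _)] at hconst
  linear_combination hconst

theorem anciaux_curvature_general (hJ : ∀ v, ⟪J v, v⟫ = 0) (hγ : ∀ t, HasDerivAt γ (γ' t) t)
    (hγ' : ∀ t, HasDerivAt γ' (γ'' t) t) (hne : ∀ t, γ t ≠ 0)
    (hAnc : ∀ t, γ'' t =
      (⟪γ' t, J (γ t)⟫ * ((‖γ t‖ ^ 2 - 1) / ‖γ t‖ ^ 2)) • J (γ' t)) (t₀ : ℝ) :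
    (∀ t, ‖γ t‖ * ⟪γ' t, J (γ t)⟫ * Real.exp (-‖γ t‖ ^ 2 / 2) =
        ‖γ t₀‖ * ⟪γ' t₀, J (γ t₀)⟫ * Real.exp (-‖γ t₀‖ ^ 2 / 2)) ∧
      ∀ t, ⟪γ'' t, J (γ' t)⟫ =
        (‖γ t₀‖ * ⟪γ' t₀, J (γ t₀)⟫ * Real.exp (-‖γ t₀‖ ^ 2 / 2)) *
          Real.exp (‖γ t‖ ^ 2 / 2) * (‖γ t‖ ^ 2 - 1) / ‖γ t‖ ^ 3 * ‖γ' t‖ ^ 2 := by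
  have hconst (t : ℝ) := anciaux_first_integral hJ hγ hne (fun t ↦ hAnc t ▸ hγ' t) t t₀
  refine ⟨hconst, fun t ↦ ?_⟩
  have hnorm : ‖γ t‖ ≠ 0 := norm_ne_zero_iff.2 (hne t)
  rw [← hconst t, hAnc t, real_inner_smul_left, J.inner_map_map, real_inner_self_eq_norm_sq,
    neg_div, Real.exp_neg]
  field_simp

end SkewIsometry

lemma rinner_eq_inner (u v : ℂ) : rinner u v = ⟪u, v⟫ := by
  simp only [rinner, Complex.inner, Complex.mul_re, Complex.conj_re, Complex.conj_im]
  ring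

/-- For a nonvanishing smooth arclength-parametrized curve satisfying the Anciaux
equation γ'' = ⟨γ', iγ⟩((|γ|²-1)/|γ|²) iγ', the quantity |γ|⟨γ', iγ⟩e^{-|γ|²/2} is
constant equal to E, and the curvature κ = ⟨γ'', iγ'⟩ equals E e^{r²/2}(r²-1)/r³. -/
theorem anciaux_curvature (γ : ℝ → ℂ) (hsmooth : ContDiff ℝ (⊤ : ℕ∞) γ)
    (harc : ∀ t, ‖deriv γ t‖ = 1) (hne : ∀ t, γ t ≠ 0)
    (hAnc : ∀ t, deriv (deriv γ) t =
      (rinner (deriv γ t) (Complex.I * γ t) * ((‖γ t‖ ^ 2 - 1) / ‖γ t‖ ^ 2))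
        • (Complex.I * deriv γ t)) :
    (∀ t, ‖γ t‖ * rinner (deriv γ t) (Complex.I * γ t) * Real.exp (-‖γ t‖ ^ 2 / 2)
        = ‖γ 0‖ * rinner (deriv γ 0) (Complex.I * γ 0) * Real.exp (-‖γ 0‖ ^ 2 / 2)) ∧
    (∀ t, rinner (deriv (deriv γ) t) (Complex.I * deriv γ t)
        = (‖γ 0‖ * rinner (deriv γ 0) (Complex.I * γ 0) * Real.exp (-‖γ 0‖ ^ 2 / 2))
            * Real.exp (‖γ t‖ ^ 2 / 2) * (‖γ t‖ ^ 2 - 1) / ‖γ t‖ ^ 3) := by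
  have := Complex.finrank_real_complex_fact
  have hγ' : ContDiff ℝ (⊤ : ℕ∞) (deriv γ) := (contDiff_infty_iff_deriv.1 hsmooth).2
  simpa [rinner_eq_inner, harc] using anciaux_curvature_general
    (J := Complex.orientation.rightAngleRotation.toLinearIsometry)
    Complex.orientation.inner_rightAngleRotation_self
    (fun t ↦ (hsmooth.differentiable (by simp) t).hasDerivAt)
    (fun t ↦ (hγ'.differentiable (by simp) t).hasDerivAt) hne
    (by simpa [rinner_eq_inner] using hAnc) 0
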